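/- For every $w \in F_2$, the word $g = a^{|w|+2} b^{|w|+2}$ is primitivity-blocking whenever $w$ is primitive: no cyclically reduced primitive element of $F_2$ whose length arises as an automorphic image of $w$ contains $g$ as a subword. More generally, there exist arbitrarily many distinct orbit-blocking words for $w$: for all integers $s, t \ge |w|+2$, the word $a^s b^t$ is orbit-blocking for $w$. -/

import Mathlib

open FreeGroup List

abbrev F2 := FreeGroup (Fin 2)

/-- The generator `a` of `F₂`. -/
def ga : F2 := FreeGroup.of 0

/-- The generator `b` of `F₂`. -/
def gb : F2 := FreeGroup.of 1

/-- `v` contains a block `x^{±k}`: `k` consecutive occurrences of the letter `x`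
with the same sign, as a contiguous subword of the reduced word of `v`.
Thus "every `x`-exponent of `v` has absolute value `≤ n`" is `¬ HasBlock x (n+1) v`. -/
def HasBlock (x : Fin 2) (k : ℕ) (v : F2) : Prop :=
  (List.replicate k (x, true)) <:+: v.toWord ∨ (List.replicate k (x, false)) <:+: v.toWord

/-- A reduced word is cyclically reduced if its last letter is not
the inverse of its first letter. -/
def CyclicallyReduced (l : List (Fin 2 × Bool)) : Prop :=
  ∀ p ∈ l.head?, ∀ q ∈ l.getLast?, q ≠ (p.1, !p.2)

/-- `(x, y)` is a basis of `F₂`: the image of `(a, b)` under an automorphism. -/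
def IsBasis (x y : F2) : Prop := ∃ φ : F2 ≃* F2, φ ga = x ∧ φ gb = y

/-- An element is primitive if it is part of a basis of `F₂`. -/
def IsPrimitive (u : F2) : Prop := ∃ v, IsBasis u v

/-- `g` is orbit-blocking for `w`: no cyclically reduced automorphic image of `w`
contains `g` as a subword. -/
def OrbitBlocking (g w : F2) : Prop :=
  ∀ φ : F2 ≃* F2, CyclicallyReduced (φ w).toWord → ¬ g.toWord <:+: (φ w).toWord

/-- `g` is primitivity-blocking: no cyclically reduced primitive element contains `g`
as a subword. -/
def PrimitivityBlocking (g : F2) : Prop :=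
  ∀ u : F2, IsPrimitive u → CyclicallyReduced u.toWord → ¬ g.toWord <:+: u.toWord

section Prefixes

variable {α : Type*}

theorem FreeGroup.IsReduced.invRev [DecidableEq α] {l : List (α × Bool)} (h : IsReduced l) :
    IsReduced (FreeGroup.invRev l) := by
  rw [isReduced_iff_reduce_eq, reduce_invRev, h.reduce_eq]

theorem FreeGroup.IsReduced.exists_common_prefix [DecidableEq α] :
    ∀ {l m : List (α × Bool)}, IsReduced l → IsReduced m →
      ∃ p u v, l = p ++ u ∧ m = p ++ v ∧ IsReduced (FreeGroup.invRev u ++ v)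
  | [], m, _, hm => ⟨[], [], m, rfl, rfl, by simpa using hm⟩
  | x :: l, [], hl, _ => ⟨[], x :: l, [], rfl, rfl, by simpa using hl.invRev⟩
  | x :: l, y :: m, hl, hm => by
    by_cases hxy : x = y
    · subst hxy
      obtain ⟨p, u, v, rfl, rfl, h⟩ :=
        exists_common_prefix (List.IsChain.tail hl) (List.IsChain.tail hm)
      exact ⟨x :: p, u, v, rfl, rfl, h⟩
    · refine ⟨[], x :: l, y :: m, rfl, rfl, List.IsChain.append hl.invRev hm ?_⟩
      simp only [FreeGroup.invRev, map_cons, reverse_cons, getLast?_append, getLast?_singleton,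
        Option.some_or, Option.mem_def, Option.some.injEq, forall_eq', head?_cons]
      intro h1
      rcases x with ⟨i, b⟩
      rcases y with ⟨j, c⟩
      cases b <;> cases c <;> simp_all

theorem FreeGroup.exists_common_prefix [DecidableEq α] (g h : FreeGroup α) :
    ∃ p u v, g.toWord = p ++ u ∧ h.toWord = p ++ v ∧
      (g⁻¹ * h).toWord = FreeGroup.invRev u ++ v := by
  obtain ⟨p, u, v, hg, hh, hr⟩ :=
    (isReduced_toWord (x := g)).exists_common_prefix (isReduced_toWord (x := h))
  refine ⟨p, u, v, hg, hh, ?_⟩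
  have : g⁻¹ * h = mk (FreeGroup.invRev u ++ v) := by
    rw [← mk_toWord (x := g), ← mk_toWord (x := h), hg, hh, ← mul_mk, ← mul_mk, ← mul_mk, ← inv_mk]
    group
  rw [this, toWord_mk, hr.reduce_eq]

/-- Twice the Gromov product of `g` and `h` in the Cayley tree, that is, twice the length of the
longest common prefix of their reduced words. -/
def gromov [DecidableEq α] (g h : FreeGroup α) : ℤ :=
  g.norm + h.norm - (g⁻¹ * h).norm

variable [DecidableEq α] (g h k : FreeGroup α)

theorem exists_gromov_eq :
    ∃ p u v, g.toWord = p ++ u ∧ h.toWord = p ++ v ∧ gromov g h = 2 * p.length := by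
  obtain ⟨p, u, v, hg, hh, hgh⟩ := exists_common_prefix g h
  refine ⟨p, u, v, hg, hh, ?_⟩
  simp only [gromov, FreeGroup.norm, hg, hh, hgh, length_append, invRev_length]
  push_cast
  ring

theorem le_gromov {g h : FreeGroup α} {p : List (α × Bool)} (hg : p <+: g.toWord)
    (hh : p <+: h.toWord) : 2 * (p.length : ℤ) ≤ gromov g h := by
  obtain ⟨u, hg⟩ := hg
  obtain ⟨v, hh⟩ := hh
  have h1 : g⁻¹ * h = mk (FreeGroup.invRev u ++ v) := by
    rw [← mk_toWord (x := g), ← mk_toWord (x := h), ← hg, ← hh, ← mul_mk, ← mul_mk, ← mul_mk,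
      ← inv_mk]
    group
  have h2 : (g⁻¹ * h).norm ≤ u.length + v.length := by
    rw [h1]
    simpa using norm_mk_le (L₁ := FreeGroup.invRev u ++ v)
  simp only [gromov, FreeGroup.norm] at h2 ⊢
  simp only [← hg, ← hh, length_append]
  push_cast
  lia

theorem gromov_comm : gromov g h = gromov h g := by
  have : (g⁻¹ * h).norm = (h⁻¹ * g).norm := by rw [← norm_inv_eq]; simp
  simp only [gromov, this]
  ring

theorem gromov_nonneg : 0 ≤ gromov g h := by
  simpa using le_gromov (nil_prefix (l := g.toWord)) (nil_prefix (l := h.toWord))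

theorem even_gromov : Even (gromov g h) := by
  obtain ⟨p, u, v, -, -, h⟩ := exists_gromov_eq g h
  exact ⟨p.length, by lia⟩

theorem min_gromov_le : min (gromov g k) (gromov k h) ≤ gromov g h := by
  obtain ⟨p, u, v, hg, hk, e⟩ := exists_gromov_eq g k
  obtain ⟨p', u', v', hk', hh, e'⟩ := exists_gromov_eq k h
  have hp : p <+: k.toWord := ⟨v, hk.symm⟩
  have hp' : p' <+: k.toWord := ⟨u', hk'.symm⟩
  rw [e, e']
  rcases le_total p.length p'.length with hl | hl
  · exact (min_le_left _ _).trans (le_gromov ⟨u, hg.symm⟩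
      ((prefix_of_prefix_length_le hp hp' hl).trans ⟨v', hh.symm⟩))
  · exact (min_le_right _ _).trans (le_gromov
      ((prefix_of_prefix_length_le hp' hp hl).trans ⟨u, hg.symm⟩) ⟨v', hh.symm⟩)

theorem gromov_inv_self_lt {g : FreeGroup α} (hg : g ≠ 1) : gromov g⁻¹ g < g.norm := by
  rw [gromov_comm]
  by_contra! hle
  obtain ⟨p, u, v, h1, h2, e⟩ := exists_gromov_eq g g⁻¹
  have hlen : g.norm = p.length + u.length := by simp [FreeGroup.norm, h1]
  rw [toWord_inv, h1, invRev_append] at h2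
  obtain ⟨z, rfl⟩ : FreeGroup.invRev u <+: p :=
    prefix_of_prefix_length_le ⟨_, h2⟩ ⟨v, rfl⟩ (by rw [invRev_length]; lia)
  rw [invRev_append, invRev_invRev, append_assoc, append_cancel_left_eq] at h2
  have hz : FreeGroup.invRev z = z := (append_inj h2 (by simp)).1
  have hz' : (mk z : FreeGroup α) ^ 2 = 1 := by
    rw [pow_two]
    nth_rw 1 [← hz]
    rw [← inv_mk, inv_mul_cancel]
  have hz1 : (mk z : FreeGroup α) = 1 := (pow_eq_one_iff_left two_ne_zero).1 hz'
  apply hg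
  rw [← mk_toWord (x := g), h1, ← mul_mk, ← mul_mk, hz1, ← inv_mk]
  group

/-- If `g` cancels half of `h` in both `g * h` and `h * g`, then conjugating by the
second half of `h` shortens the pair `(g * h, h)`. -/
theorem exists_conj_norm_lt {g h : FreeGroup α} (hh : h ≠ 1) (hle : h.norm ≤ g.norm)
    (h1 : gromov g⁻¹ h = h.norm) (h2 : gromov h⁻¹ g = h.norm) :
    ∃ q : FreeGroup α, (q⁻¹ * (g * h) * q).norm + (q⁻¹ * h * q).norm < g.norm + h.norm := by
  obtain ⟨p, a, b, e1, e2, e3⟩ := exists_gromov_eq g⁻¹ h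
  obtain ⟨q, c, d, f1, f2, f3⟩ := exists_gromov_eq h⁻¹ g
  have hpos : 0 < h.norm := Nat.pos_of_ne_zero (by simpa [FreeGroup.norm_eq_zero] using hh)
  have l1 : h.norm = p.length + b.length := by simp [FreeGroup.norm, e2]
  have l2 : g.norm = q.length + d.length := by simp [FreeGroup.norm, f2]
  rw [toWord_inv, e2, invRev_append] at f1
  obtain rfl : FreeGroup.invRev b = q := (append_inj f1 (by rw [invRev_length]; lia)).1
  rw [invRev_length] at l2 f3
  obtain ⟨r, hr⟩ : FreeGroup.invRev p <:+ d := by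
    refine suffix_of_suffix_length_le (l₃ := g.toWord) ⟨FreeGroup.invRev a, ?_⟩ ⟨_, f2.symm⟩ ?_
    · rw [← invRev_append, ← e1, toWord_inv, invRev_invRev]
    · rw [invRev_length]; lia
  have l3 : d.length = r.length + p.length := by simp [← hr]
  have hg : g = (mk b)⁻¹ * mk r * (mk p)⁻¹ := by
    rw [← mk_toWord (x := g), f2, ← hr, inv_mk, inv_mk, mul_mk, mul_mk, append_assoc]
  have hh : h = mk p * mk b := by rw [← mk_toWord (x := h), e2, mul_mk]
  refine ⟨(mk b)⁻¹, ?_⟩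
  have c1 : ((mk b)⁻¹)⁻¹ * (g * h) * (mk b)⁻¹ = mk r := by rw [hg, hh]; group
  have c2 : ((mk b)⁻¹)⁻¹ * h * (mk b)⁻¹ = mk (b ++ p) := by rw [hh, ← mul_mk]; group
  rw [c1, c2]
  have n1 := norm_mk_le (L₁ := r)
  have n2 := norm_mk_le (L₁ := b ++ p)
  rw [length_append] at n2
  lia

end Prefixes

section NielsenReduced

variable {α β : Type*} [DecidableEq α]

/-- The images of the letters under `f` are Nielsen reduced: in a product of three consecutive
images the middle one is not swallowed by cancellation. -/
def NielsenReduced (f : FreeGroup β →* FreeGroup α) : Prop :=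
  ∀ l m n : β × Bool, (l.1 = m.1 → l.2 = m.2) → (m.1 = n.1 → m.2 = n.2) →
    gromov (f (mk [l]))⁻¹ (f (mk [m])) + gromov (f (mk [m]))⁻¹ (f (mk [n])) <
      2 * (f (mk [m])).norm

namespace NielsenReduced

variable {f : FreeGroup β →* FreeGroup α}

theorem gromov_lt_right (hf : NielsenReduced f) {l m : β × Bool} (h : l.1 = m.1 → l.2 = m.2) :
    gromov (f (mk [l]))⁻¹ (f (mk [m])) < 2 * (f (mk [m])).norm := by
  have h1 := hf l m m h (fun _ => rfl)
  have h2 := gromov_nonneg (f (mk [m]))⁻¹ (f (mk [m]))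
  lia

theorem gromov_lt_left (hf : NielsenReduced f) {l m : β × Bool} (h : l.1 = m.1 → l.2 = m.2) :
    gromov (f (mk [l]))⁻¹ (f (mk [m])) < 2 * (f (mk [l])).norm := by
  have h1 := hf l l m (fun _ => rfl) h
  have h2 := gromov_nonneg (f (mk [l]))⁻¹ (f (mk [l]))
  lia

/-- Cancellation between `f l` and the image of a reduced word only depends on the first letter of
that word. -/
theorem gromov_cons (hf : NielsenReduced f) :
    ∀ {l m : β × Bool} {w : List (β × Bool)}, IsReduced (l :: m :: w) →
      gromov (f (mk [l]))⁻¹ (f (mk (m :: w))) = gromov (f (mk [l]))⁻¹ (f (mk [m]))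
  | _, _, [], _ => rfl
  | l, m, n :: w, h => by
    obtain ⟨hlm, h'⟩ := isReduced_cons_cons.1 h
    obtain ⟨hmn, -⟩ := isReduced_cons_cons.1 h'
    have ih := gromov_cons hf h'
    have hlt := hf l m n hlm hmn
    have hW : f (mk (m :: n :: w)) = f (mk [m]) * f (mk (n :: w)) := by
      rw [← _root_.map_mul, mul_mk, singleton_append]
    have h1 := min_gromov_le (f (mk [l]))⁻¹ (f (mk (m :: n :: w))) (f (mk [m]))
    have h2 := min_gromov_le (f (mk [l]))⁻¹ (f (mk [m])) (f (mk (m :: n :: w)))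
    have h3 : gromov (f (mk [m])) (f (mk (m :: n :: w))) =
        2 * (f (mk [m])).norm - gromov (f (mk [m]))⁻¹ (f (mk (n :: w))) := by
      simp only [gromov, hW, inv_mul_cancel_left, inv_inv, norm_inv_eq]
      ring
    rw [gromov_comm (f (mk (m :: n :: w)))] at h2
    rw [ih] at h3
    lia

theorem norm_cons_cons (hf : NielsenReduced f) {l m : β × Bool} {w : List (β × Bool)}
    (h : IsReduced (l :: m :: w)) :
    ((f (mk (l :: m :: w))).norm : ℤ) = (f (mk [l])).norm + (f (mk (m :: w))).norm -
      gromov (f (mk [l]))⁻¹ (f (mk [m])) := by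
  have hW : f (mk (l :: m :: w)) = f (mk [l]) * f (mk (m :: w)) := by
    rw [← _root_.map_mul, mul_mk, singleton_append]
  rw [← hf.gromov_cons h, hW]
  simp only [gromov, inv_inv, norm_inv_eq]
  ring

theorem norm_cons_cons_ge (hf : NielsenReduced f) :
    ∀ {l m : β × Bool} {w : List (β × Bool)}, IsReduced (l :: m :: w) →
      2 * (w.length + 1 : ℤ) + 2 * (f (mk [l])).norm - gromov (f (mk [l]))⁻¹ (f (mk [m])) ≤
        2 * (f (mk (l :: m :: w))).norm
  | l, m, [], h => by
    have h1 := hf.norm_cons_cons h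
    have h2 := hf.gromov_lt_right (isReduced_cons_cons.1 h).1
    obtain ⟨k, hk⟩ := even_gromov (f (mk [l]))⁻¹ (f (mk [m]))
    simp only [length_nil]
    lia
  | l, m, n :: w, h => by
    obtain ⟨hlm, h'⟩ := isReduced_cons_cons.1 h
    have ih := norm_cons_cons_ge hf h'
    have h1 := hf.norm_cons_cons h
    have h2 := hf l m n hlm (isReduced_cons_cons.1 h').1
    obtain ⟨i, hi⟩ := even_gromov (f (mk [l]))⁻¹ (f (mk [m]))
    obtain ⟨j, hj⟩ := even_gromov (f (mk [m]))⁻¹ (f (mk [n]))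
    simp only [length_cons]
    push_cast
    lia

/-- Elements of length one in the image of a Nielsen reduced map are images of letters. -/
theorem exists_letter [DecidableEq β] (hf : NielsenReduced f) {z : FreeGroup β}
    (hz : (f z).norm = 1) : ∃ l : β × Bool, f z = f (mk [l]) := by
  have hr := isReduced_toWord (x := z)
  rw [← mk_toWord (x := z)] at hz ⊢
  generalize z.toWord = w at hr hz ⊢
  match w, hr, hz with
  | [], _, hz => simp [← one_eq_mk] at hz
  | [l], _, _ => exact ⟨l, rfl⟩
  | l :: m :: w, hr, hz =>
    have h1 := hf.norm_cons_cons_ge hr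
    have h2 := hf.gromov_lt_left (isReduced_cons_cons.1 hr).1
    lia

end NielsenReduced

end NielsenReduced

section Generation

/-- `x` and `y` generate `F₂`. -/
def Generates (x y : F2) : Prop := Subgroup.closure {x, y} = ⊤

theorem Generates.of_mem {x y x' y' : F2} (h : Generates x y)
    (hx : x ∈ Subgroup.closure {x', y'}) (hy : y ∈ Subgroup.closure {x', y'}) :
    Generates x' y' := by
  rw [Generates, eq_top_iff, ← h, Subgroup.closure_le]
  rintro z (rfl | rfl)
  exacts [hx, hy]

theorem Generates.swap {x y : F2} (h : Generates x y) : Generates y x := by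
  rwa [Generates, Set.pair_comm]

theorem Generates.inv {x y : F2} (h : Generates x y) : Generates x⁻¹ y :=
  h.of_mem (by simpa using inv_mem (Subgroup.subset_closure (Set.mem_insert x⁻¹ {y})))
    (Subgroup.subset_closure (by simp))

theorem Generates.mul {x y : F2} (h : Generates x y) : Generates (x * y) y := by
  have hy : y ∈ Subgroup.closure {x * y, y} := Subgroup.subset_closure (by simp)
  refine h.of_mem ?_ hy
  have := mul_mem (Subgroup.subset_closure (Set.mem_insert (x * y) {y})) (inv_mem hy)
  simpa using this

theorem Generates.conj {x y : F2} (h : Generates x y) (g : F2) :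
    Generates (g * x * g⁻¹) (g * y * g⁻¹) := by
  have h1 := congrArg (Subgroup.map (MulAut.conj g).toMonoidHom) h
  rw [MonoidHom.map_closure, Set.image_pair,
    Subgroup.map_top_of_surjective _ (MulAut.conj g).surjective] at h1
  simpa [Generates] using h1

theorem Generates.ne_one {x y : F2} (h : Generates x y) : y ≠ 1 := by
  rintro rfl
  have hmem : ∀ z : F2, z ∈ Subgroup.zpowers x := by
    intro z
    have hz : z ∈ Subgroup.closure {x, 1} := by rw [h]; trivial
    rwa [Set.pair_comm, Subgroup.closure_insert_one, ← Subgroup.zpowers_eq_closure] at hz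
  obtain ⟨i, hi⟩ := hmem ga
  obtain ⟨j, hj⟩ := hmem gb
  have hcomm : ga * gb = gb * ga := by
    rw [← hi, ← hj]
    exact (Commute.refl x).zpow_zpow i j
  exact absurd (congrArg toWord hcomm) (by decide)

theorem generates_map (φ : F2 ≃* F2) : Generates (φ ga) (φ gb) := by
  have h : Subgroup.closure (Set.range (FreeGroup.of : Fin 2 → F2)) = ⊤ :=
    FreeGroup.closure_range_of _
  have hr : Set.range (FreeGroup.of : Fin 2 → F2) = {ga, gb} := by
    ext z
    simp [ga, gb, eq_comm]
  rw [hr] at h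
  have h1 := congrArg (Subgroup.map φ.toMonoidHom) h
  rw [MonoidHom.map_closure, Set.image_pair, Subgroup.map_top_of_surjective _ φ.surjective] at h1
  simpa [Generates] using h1

/-- The homomorphism sending `a` to `x` and `b` to `y`. -/
def pairHom (x y : F2) : F2 →* F2 := FreeGroup.lift ![x, y]

theorem pairHom_letter (x y : F2) (l : Fin 2 × Bool) :
    pairHom x y (mk [l]) = if l.2 then ![x, y] l.1 else (![x, y] l.1)⁻¹ := by
  rcases l with ⟨i, b⟩
  cases b <;> simp [pairHom]

theorem pairHom_ga (x y : F2) : pairHom x y ga = x := by simp [pairHom, ga]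

theorem pairHom_gb (x y : F2) : pairHom x y gb = y := by simp [pairHom, gb]

theorem Generates.pairHom_surjective {x y : F2} (h : Generates x y) :
    Function.Surjective (pairHom x y) := by
  rw [← MonoidHom.range_eq_top, eq_top_iff, ← h, Subgroup.closure_le]
  rintro z (rfl | rfl)
  exacts [⟨ga, pairHom_ga _ _⟩, ⟨gb, pairHom_gb _ _⟩]

/-- **Nielsen's theorem** in rank two, as an induction principle for generating pairs. -/
theorem Generates.induction {S : F2 → F2 → Prop} (base : S ga gb)
    (swap : ∀ {x y}, S x y → S y x) (inv : ∀ {x y}, S x y → S x⁻¹ y)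
    (mul : ∀ {x y}, S x y → S (x * y) y)
    (conj : ∀ {x y} (g), S x y → S (g * x * g⁻¹) (g * y * g⁻¹)) {x y : F2}
    (h : Generates x y) : S x y := by
  have inv' : ∀ {x y}, S x y → S x y⁻¹ := fun h => swap (inv (swap h))
  induction hn : x.norm + y.norm using Nat.strong_induction_on generalizing x y with
  | _ n ih =>
  subst hn
  by_contra hS
  -- pairs that may be substituted for `(x, y)`
  let A (u v : F2) : Prop :=
    Generates u v ∧ (S u v → S x y) ∧ u.norm + v.norm = x.norm + y.norm
  have Aswap : ∀ {u v}, A u v → A v u := fun ⟨h1, h2, h3⟩ =>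
    ⟨h1.swap, fun h => h2 (swap h), by lia⟩
  have Ainv : ∀ {u v}, A u v → A u⁻¹ v := fun ⟨h1, h2, h3⟩ =>
    ⟨h1.inv, fun h => h2 (by simpa using inv h), by rwa [norm_inv_eq]⟩
  have hle : ∀ {u v}, A u v → u.norm ≤ (u * v).norm := by
    rintro u v ⟨h1, h2, h3⟩
    by_contra! hlt
    have := ih _ (by lia) h1.mul rfl
    exact hS (h2 (by simpa using inv' (mul (inv' this))))
  have hleft : ∀ {u v}, A u v → gromov u⁻¹ v ≤ v.norm := by
    intro u v huv
    have := hle huv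
    simp only [gromov, inv_inv, norm_inv_eq]
    lia
  have hright : ∀ {u v}, A u v → gromov u⁻¹ v ≤ u.norm := by
    intro u v huv
    have := hleft (Ainv (Aswap (Ainv huv)))
    rwa [inv_inv, norm_inv_eq, gromov_comm] at this
  have htie : ∀ {u v}, A u v → gromov u⁻¹ v = v.norm → gromov v⁻¹ u = v.norm → False := by
    intro u v huv e1 e2
    obtain ⟨q, hq⟩ := exists_conj_norm_lt huv.1.ne_one (by have := hright huv; lia) e1 e2
    have hG := huv.1.mul.conj q⁻¹
    rw [inv_inv] at hG
    have h1 := conj q (ih _ (by rw [← huv.2.2]; exact hq) hG rfl)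
    simp only [mul_assoc, mul_inv_cancel_left, mul_inv_cancel, mul_one] at h1
    exact hS (huv.2.1 (by simpa using inv' (mul (inv' h1))))
  have hA : ∀ {l m : Fin 2 × Bool}, l.1 ≠ m.1 →
      A (pairHom x y (mk [l])) (pairHom x y (mk [m])) := by
    have hsign : ∀ {u v}, A u v → ∀ b c : Bool,
        A (if b then u else u⁻¹) (if c then v else v⁻¹) := by
      intro u v huv b c
      cases b <;> cases c
      exacts [Ainv (Aswap (Ainv (Aswap huv))), Ainv huv, Aswap (Ainv (Aswap huv)), huv]
    have hxy : A x y := ⟨h, id, rfl⟩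
    rintro ⟨i, b⟩ ⟨j, c⟩ hij
    rw [pairHom_letter, pairHom_letter]
    fin_cases i <;> fin_cases j
    exacts [absurd rfl hij, hsign hxy b c, hsign (Aswap hxy) b c, absurd rfl hij]
  have hred : NielsenReduced (pairHom x y) := by
    intro l m n hlm hmn
    have hm : pairHom x y (mk [m]) ≠ 1 :=
      (hA (l := (1 - m.1, true)) (m := m) (by rcases m with ⟨i, b⟩; fin_cases i <;> simp)).1.ne_one
    have hself := gromov_inv_self_lt hm
    have b1 : gromov (pairHom x y (mk [l]))⁻¹ (pairHom x y (mk [m])) ≤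
        (pairHom x y (mk [m])).norm := by
      by_cases e : l.1 = m.1
      · rw [Prod.ext e (hlm e)]; exact hself.le
      · exact hleft (hA e)
    have b2 : gromov (pairHom x y (mk [m]))⁻¹ (pairHom x y (mk [n])) ≤
        (pairHom x y (mk [m])).norm := by
      by_cases e : m.1 = n.1
      · rw [← Prod.ext e (hmn e)]; exact hself.le
      · exact hright (hA e)
    by_contra! hge
    have e1 : gromov (pairHom x y (mk [l]))⁻¹ (pairHom x y (mk [m])) =
        (pairHom x y (mk [m])).norm := by lia
    have e2 : gromov (pairHom x y (mk [m]))⁻¹ (pairHom x y (mk [n])) =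
        (pairHom x y (mk [m])).norm := by lia
    have hlm' : l.1 ≠ m.1 := fun e => by rw [Prod.ext e (hlm e)] at e1; lia
    have hmn' : m.1 ≠ n.1 := fun e => by rw [← Prod.ext e (hmn e)] at e2; lia
    have hln : l.1 = n.1 := by lia
    by_cases hb : l.2 = n.2
    · rw [← Prod.ext hln hb] at e2
      exact htie (hA hlm') e1 e2
    · have hinv : pairHom x y (mk [n]) = (pairHom x y (mk [l]))⁻¹ := by
        rw [← _root_.map_inv, inv_mk]
        congr 2
        rcases l with ⟨i, b⟩
        rcases n with ⟨j, c⟩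
        cases b <;> cases c <;> simp_all [FreeGroup.invRev]
      have := min_gromov_le (pairHom x y (mk [m]))⁻¹ (pairHom x y (mk [m]))
        (pairHom x y (mk [l]))⁻¹
      rw [e1, ← hinv, e2] at this
      lia
  have hletter : ∀ i : Fin 2, ∃ l, FreeGroup.of i = pairHom x y (mk [l]) := by
    intro i
    obtain ⟨z, hz⟩ := h.pairHom_surjective (FreeGroup.of i)
    obtain ⟨l, hl⟩ := hred.exists_letter (z := z) (by rw [hz, norm_of])
    exact ⟨l, hz ▸ hl⟩
  obtain ⟨l, hl⟩ := hletter 0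
  obtain ⟨m, hm⟩ := hletter 1
  have hlm : l.1 ≠ m.1 := by
    rcases l with ⟨i, b⟩
    rcases m with ⟨j, c⟩
    rintro (rfl : i = j)
    rw [pairHom_letter] at hl hm
    have hne : (FreeGroup.of 0 : F2) ≠ FreeGroup.of 1 := by decide
    have hne' : (FreeGroup.of 0 : F2) ≠ (FreeGroup.of 1)⁻¹ := by decide
    cases b <;> cases c <;> simp_all
  exact hS ((hA hlm).2.1 (by rw [← hl, ← hm]; exact base))

end Generation

section PositivePairs

/-- Pairs obtained from a basis of letters by multiplying one member with the other. -/
inductive PositivePair : F2 → F2 → Prop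
  | base {l m : Fin 2 × Bool} : l.1 ≠ m.1 → PositivePair (mk [l]) (mk [m])
  | mul_left {p q : F2} : PositivePair p q → PositivePair (p * q) q
  | mul_right {p q : F2} : PositivePair p q → PositivePair p (q * p)

theorem PositivePair.swap {p q : F2} (h : PositivePair p q) : PositivePair q p := by
  induction h with
  | base h => exact .base h.symm
  | mul_left _ ih => exact .mul_right ih
  | mul_right _ ih => exact .mul_left ih

/-- `x` and `y` are, up to inversion, simultaneously conjugate to a positive pair. -/
def IsConjPositivePair (x y : F2) : Prop :=
  ∃ g p q, PositivePair p q ∧ (x = g * p * g⁻¹ ∨ x = g * p⁻¹ * g⁻¹) ∧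
    (y = g * q * g⁻¹ ∨ y = g * q⁻¹ * g⁻¹)

namespace IsConjPositivePair

variable {x y p q : F2}

theorem of_positivePair (h : PositivePair p q) : IsConjPositivePair p q :=
  ⟨1, p, q, h, by simp, by simp⟩

theorem swap (h : IsConjPositivePair x y) : IsConjPositivePair y x := by
  obtain ⟨g, p, q, h, hx, hy⟩ := h
  exact ⟨g, q, p, h.swap, hy, hx⟩

theorem inv (h : IsConjPositivePair x y) : IsConjPositivePair x⁻¹ y := by
  obtain ⟨g, p, q, h, hx, hy⟩ := h
  refine ⟨g, p, q, h, ?_, hy⟩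
  rcases hx with rfl | rfl
  · right; group
  · left; group

theorem inv_right (h : IsConjPositivePair x y) : IsConjPositivePair x y⁻¹ :=
  h.swap.inv.swap

theorem conj (g : F2) (h : IsConjPositivePair x y) :
    IsConjPositivePair (g * x * g⁻¹) (g * y * g⁻¹) := by
  obtain ⟨k, p, q, h, hx, hy⟩ := h
  refine ⟨g * k, p, q, h, ?_, ?_⟩
  · rcases hx with rfl | rfl
    · left; group
    · right; group
  · rcases hy with rfl | rfl
    · left; group
    · right; group

theorem mul_inv_of_positivePair (h : PositivePair p q) : IsConjPositivePair (p * q⁻¹) q := by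
  cases h with
  | @base l m h =>
    have h1 : PositivePair (mk [l]) (mk [(m.1, !m.2)]) := .base h
    have h2 : (mk [(m.1, !m.2)] : F2) = (mk [m])⁻¹ := by simp [inv_mk, FreeGroup.invRev]
    rw [h2] at h1
    simpa using (of_positivePair h1.mul_left).inv_right
  | @mul_left p _ h => simpa using of_positivePair h
  | @mul_right _ q h =>
    have h1 := ((of_positivePair h.swap.mul_right).conj q).inv
    convert h1 using 1 <;> group

theorem mul (h : IsConjPositivePair x y) : IsConjPositivePair (x * y) y := by
  obtain ⟨g, p, q, h, hx, hy⟩ := h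
  rcases hx with rfl | rfl <;> rcases hy with rfl | rfl
  · convert (of_positivePair h.mul_left).conj g using 1; group
  · convert (mul_inv_of_positivePair h).inv_right.conj g using 1; group
  · convert ((mul_inv_of_positivePair h).inv.conj q⁻¹).conj g using 1 <;> group
  · convert ((of_positivePair h.mul_left).inv.inv_right.conj q).conj g using 1 <;> group

end IsConjPositivePair

theorem isConjPositivePair_map (φ : F2 ≃* F2) : IsConjPositivePair (φ ga) (φ gb) :=
  (generates_map φ).induction (.of_positivePair (.base (l := (0, true)) (m := (1, true)) (by simp)))
    .swap .inv .mul .conj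

/-- No two consecutive letters of `l` belong to the generator with index `c`. -/
def BlockFree (c : Fin 2) (l : List (Fin 2 × Bool)) : Prop :=
  l.IsChain fun x y => ¬ (x.1 = c ∧ y.1 = c)

theorem BlockFree.invRev {c : Fin 2} {l : List (Fin 2 × Bool)} (h : BlockFree c l) :
    BlockFree c (FreeGroup.invRev l) := by
  rw [BlockFree, FreeGroup.invRev, isChain_reverse, isChain_map]
  exact h.imp fun x y hxy hyx => hxy ⟨hyx.2, hyx.1⟩

theorem blockFree_of_mem_closure {l m : Fin 2 × Bool} (hlm : l.1 ≠ m.1) {z : F2}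
    (hz : z ∈ Submonoid.closure {(mk [l, m] : F2), mk [m]}) : BlockFree l.1 z.toWord := by
  obtain ⟨w, rfl, hmem, -, hw⟩ : ∃ w, z = mk w ∧ (∀ x ∈ w, x = l ∨ x = m) ∧
      (∀ x ∈ w.getLast?, x = m) ∧ w.IsChain fun x y => ¬ (x = l ∧ y = l) := by
    have hml : m ≠ l := fun h => hlm (by rw [h])
    induction hz using Submonoid.closure_induction with
    | mem z hz =>
      rcases hz with rfl | rfl
      · exact ⟨[l, m], rfl, by simp, by simp, by simpa using hml⟩
      · exact ⟨[m], rfl, by simp, by simp, by simp⟩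
    | one => exact ⟨[], rfl, by simp, by simp, by simp⟩
    | mul z z' _ _ h h' =>
      obtain ⟨w, rfl, h1, h2, h3⟩ := h
      obtain ⟨w', rfl, h1', h2', h3'⟩ := h'
      refine ⟨w ++ w', mul_mk.symm ▸ rfl, ?_, ?_, ?_⟩
      · intro x hx
        exact (mem_append.1 hx).elim (h1 x) (h1' x)
      · intro x hx
        rw [getLast?_append, Option.mem_def, Option.or_eq_some_iff] at hx
        exact hx.elim (h2' x) fun hx => h2 x hx.2
      · refine h3.append h3' fun x hx y _ hxy => hml ?_
        rw [← h2 x hx, hxy.1]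
  have hred : IsReduced w := by
    refine List.IsChain.imp_of_mem_imp (fun x y hx hy _ e => ?_) hw
    rcases hmem x hx with rfl | rfl <;> rcases hmem y hy with rfl | rfl
    exacts [rfl, absurd e hlm, absurd e.symm hlm, rfl]
  rw [toWord_mk, hred.reduce_eq]
  refine List.IsChain.imp_of_mem_imp (fun x y hx hy hxy e => hxy ?_) hw
  have h1 : ∀ t ∈ w, t.1 = l.1 → t = l := fun t ht e =>
    (hmem t ht).resolve_right fun h => hlm (by rw [← e, h])
  exact ⟨h1 x hx e.1, h1 y hy e.2⟩

theorem PositivePair.eq_letters_or_mem_closure {p q : F2} (h : PositivePair p q) :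
    (∃ l m : Fin 2 × Bool, l.1 ≠ m.1 ∧ p = mk [l] ∧ q = mk [m]) ∨
      ∃ l m : Fin 2 × Bool, l.1 ≠ m.1 ∧ p ∈ Submonoid.closure {(mk [l, m] : F2), mk [m]} ∧
        q ∈ Submonoid.closure {(mk [l, m] : F2), mk [m]} := by
  induction h with
  | @base l m h => exact .inl ⟨l, m, h, rfl, rfl⟩
  | mul_left _ ih =>
    right
    rcases ih with ⟨l, m, h, rfl, rfl⟩ | ⟨l, m, h, hp, hq⟩
    · exact ⟨l, m, h, Submonoid.subset_closure (by simp), Submonoid.subset_closure (by simp)⟩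
    · exact ⟨l, m, h, mul_mem hp hq, hq⟩
  | mul_right _ ih =>
    right
    rcases ih with ⟨l, m, h, rfl, rfl⟩ | ⟨l, m, h, hp, hq⟩
    · exact ⟨m, l, h.symm, Submonoid.subset_closure (by simp), Submonoid.subset_closure (by simp)⟩
    · exact ⟨l, m, h, hp, mul_mem hq hp⟩

theorem PositivePair.exists_blockFree {p q : F2} (h : PositivePair p q) :
    ∃ c, BlockFree c p.toWord ∧ BlockFree c q.toWord := by
  rcases h.eq_letters_or_mem_closure with ⟨l, m, h, rfl, rfl⟩ | ⟨l, m, h, hp, hq⟩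
  · exact ⟨0, by simp [BlockFree, toWord_mk], by simp [BlockFree, toWord_mk]⟩
  · exact ⟨l.1, blockFree_of_mem_closure h hp, blockFree_of_mem_closure h hq⟩

end PositivePairs

section Counting

/-- The number of pairs of consecutive letters of `l` belonging to the generator with index `c`. -/
def pairCount (c : Fin 2) : List (Fin 2 × Bool) → ℕ
  | [] => 0
  | [_] => 0
  | x :: y :: l => (if x.1 = c ∧ y.1 = c then 1 else 0) + pairCount c (y :: l)

variable (c : Fin 2)

theorem pairCount_append_le :
    ∀ l m : List (Fin 2 × Bool), pairCount c (l ++ m) ≤ pairCount c l + pairCount c m + 1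
  | [], m => by simp [pairCount]
  | [x], [] => by simp [pairCount]
  | [x], y :: m => by
    simp only [singleton_append, pairCount]
    split_ifs <;> lia
  | x :: y :: l, m => by
    have := pairCount_append_le (y :: l) m
    simp only [cons_append, pairCount] at this ⊢
    lia

theorem le_pairCount_append :
    ∀ l m : List (Fin 2 × Bool), pairCount c l + pairCount c m ≤ pairCount c (l ++ m)
  | [], m => by simp [pairCount]
  | [x], [] => by simp [pairCount]
  | [x], y :: m => by
    simp [pairCount]
  | x :: y :: l, m => by
    have := le_pairCount_append (y :: l) m
    simp only [cons_append, pairCount] at this ⊢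
    lia

theorem pairCount_le_of_infix {l m : List (Fin 2 × Bool)} (h : l <:+: m) :
    pairCount c l ≤ pairCount c m := by
  obtain ⟨s, t, rfl⟩ := h
  have h1 := le_pairCount_append c (s ++ l) t
  have h2 := le_pairCount_append c s l
  lia

theorem mul_pairCount_le (n : ℕ) (l : List (Fin 2 × Bool)) :
    n * pairCount c l ≤ pairCount c (replicate n l).flatten := by
  induction n with
  | zero => simp
  | succ n ih =>
    rw [replicate_succ, flatten_cons]
    have := le_pairCount_append c l (replicate n l).flatten
    lia

theorem pairCount_replicate (n : ℕ) (b : Bool) :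
    n ≤ pairCount c (replicate n (c, b)) + 1 := by
  induction n with
  | zero => simp
  | succ n ih =>
    cases n with
    | zero => simp
    | succ n =>
      simp only [replicate_succ, pairCount] at ih ⊢
      simp only [and_self, if_true]
      lia

theorem BlockFree.pairCount_eq_zero {c : Fin 2} :
    ∀ {l : List (Fin 2 × Bool)}, BlockFree c l → pairCount c l = 0
  | [], _ => rfl
  | [_], _ => rfl
  | x :: y :: l, h => by
    obtain ⟨h1, h2⟩ := isChain_cons_cons.1 h
    simp [pairCount, h1, BlockFree.pairCount_eq_zero (l := y :: l) h2]

theorem pairCount_mul_le (g h : F2) :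
    pairCount c (g * h).toWord ≤ pairCount c g.toWord + pairCount c h.toWord + 1 := by
  obtain ⟨p, u, v, hg, hh, hgh⟩ := exists_common_prefix g⁻¹ h
  have hg' : g.toWord = FreeGroup.invRev u ++ FreeGroup.invRev p := by
    rw [← invRev_append, ← hg, toWord_inv, invRev_invRev]
  rw [inv_inv] at hgh
  rw [hgh, hg', hh]
  have h1 := pairCount_append_le c (FreeGroup.invRev u) v
  have h2 := le_pairCount_append c (FreeGroup.invRev u) (FreeGroup.invRev p)
  have h3 := le_pairCount_append c p v
  lia

theorem pairCount_hom_le {f : F2 →* F2} (hf : ∀ l, pairCount c (f (mk [l])).toWord = 0)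
    (w : List (Fin 2 × Bool)) : pairCount c (f (mk w)).toWord ≤ w.length := by
  induction w with
  | nil => simp [← one_eq_mk, pairCount]
  | cons l w ih =>
    have hW : f (mk (l :: w)) = f (mk [l]) * f (mk w) := by
      rw [← _root_.map_mul, mul_mk, singleton_append]
    have := pairCount_mul_le c (f (mk [l])) (f (mk w))
    rw [hf, ← hW] at this
    simp only [length_cons]
    lia

end Counting

theorem exists_conj_pairCount_eq_zero (φ : F2 ≃* F2) :
    ∃ (c : Fin 2) (g : F2) (f : F2 →* F2), (∀ z, φ z = g * f z * g⁻¹) ∧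
      ∀ l, pairCount c (f (mk [l])).toWord = 0 := by
  obtain ⟨g, p, q, hpq, hx, hy⟩ := isConjPositivePair_map φ
  obtain ⟨c, hp, hq⟩ := hpq.exists_blockFree
  obtain ⟨x, hx, hxc⟩ : ∃ x, φ ga = g * x * g⁻¹ ∧ BlockFree c x.toWord := by
    rcases hx with hx | hx
    exacts [⟨p, hx, hp⟩, ⟨p⁻¹, hx, toWord_inv p ▸ hp.invRev⟩]
  obtain ⟨y, hy, hyc⟩ : ∃ y, φ gb = g * y * g⁻¹ ∧ BlockFree c y.toWord := by
    rcases hy with hy | hy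
    exacts [⟨q, hy, hq⟩, ⟨q⁻¹, hy, toWord_inv q ▸ hq.invRev⟩]
  refine ⟨c, g, pairHom x y, ?_, ?_⟩
  · have : φ.toMonoidHom = (MulAut.conj g).toMonoidHom.comp (pairHom x y) := by
      ext i
      fin_cases i
      · simpa [pairHom, ga] using hx
      · simpa [pairHom, gb] using hy
    exact fun z => DFunLike.congr_fun this z
  · rintro ⟨i, b⟩
    refine BlockFree.pairCount_eq_zero ?_
    rw [pairHom_letter]
    fin_cases i <;> cases b
    exacts [toWord_inv x ▸ hxc.invRev, hxc, toWord_inv y ▸ hyc.invRev, hyc]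

theorem CyclicallyReduced.toWord_pow {u : F2} (h : CyclicallyReduced u.toWord) (n : ℕ) :
    (u ^ n).toWord = (replicate n u.toWord).flatten := by
  have hu : IsCyclicallyReduced u.toWord := by
    refine ⟨isReduced_toWord, fun x hx y hy e => ?_⟩
    by_contra hne
    exact h y hy x hx (Prod.ext e (by simpa [Bool.eq_not] using hne))
  rw [FreeGroup.toWord_pow, (hu.flatten_replicate n).isReduced.reduce_eq]

/-- If `φ w` is cyclically reduced, then for some generator `c` the consecutive pairs of letters
`c ^ ±1` in `φ w` number at most `|w|`. -/
theorem exists_pairCount_map_le (φ : F2 ≃* F2) (w : F2) (h : CyclicallyReduced (φ w).toWord) :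
    ∃ c, pairCount c (φ w).toWord ≤ w.toWord.length := by
  obtain ⟨c, g, f, hφ, hf⟩ := exists_conj_pairCount_eq_zero φ
  refine ⟨c, ?_⟩
  by_contra! hlt
  set N := pairCount c g.toWord + pairCount c (g⁻¹).toWord + 3
  have hlow := mul_pairCount_le c N (φ w).toWord
  rw [← h.toWord_pow, ← _root_.map_pow, hφ (w ^ N)] at hlow
  have h1 := pairCount_mul_le c (g * f (w ^ N)) g⁻¹
  have h2 := pairCount_mul_le c g (f (w ^ N))
  have h3 := pairCount_hom_le c hf (replicate N w.toWord).flatten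
  have h5 : (replicate N w.toWord).flatten.length = N * w.toWord.length := by simp
  rw [← pow_mk, mk_toWord, h5] at h3
  have h4 : N * (w.toWord.length + 1) ≤ N * pairCount c (φ w).toWord := Nat.mul_le_mul_left N hlt
  rw [mul_add, mul_one] at h4
  lia

theorem toWord_ga_pow_mul_gb_pow (s t : ℕ) :
    (ga ^ s * gb ^ t).toWord = replicate s (0, true) ++ replicate t (1, true) := by
  have h : IsReduced (replicate s ((0 : Fin 2), true) ++ replicate t (1, true)) := by
    refine (isChain_replicate_of_rel s fun _ => rfl).append
      (isChain_replicate_of_rel t fun _ => rfl) fun x hx y hy e => ?_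
    rw [eq_of_mem_replicate (mem_of_getLast? hx), eq_of_mem_replicate (mem_of_head? hy)]
  rw [toWord_mul, ga, gb, toWord_of_pow, toWord_of_pow, h.reduce_eq]

theorem orbitBlocking_ga_pow_mul_gb_pow {w : F2} {s t : ℕ} (hs : w.toWord.length + 2 ≤ s)
    (ht : w.toWord.length + 2 ≤ t) : OrbitBlocking (ga ^ s * gb ^ t) w := by
  intro φ hφ hin
  rw [toWord_ga_pow_mul_gb_pow] at hin
  obtain ⟨c, hc⟩ := exists_pairCount_map_le φ w hφ
  obtain ⟨n, hn, h⟩ : ∃ n, w.toWord.length + 2 ≤ n ∧ replicate n (c, true) <:+: (φ w).toWord := by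
    fin_cases c
    · exact ⟨s, hs, (prefix_append _ _).isInfix.trans hin⟩
    · exact ⟨t, ht, (suffix_append _ _).isInfix.trans hin⟩
  have h1 := pairCount_le_of_infix c h
  have h2 := pairCount_replicate c n true
  lia

/-- For every `w`, the word `a^{|w|+2} b^{|w|+2}` is primitivity-blocking whenever `w`
is primitive, and more generally `a^s b^t` is orbit-blocking for `w` for all
`s, t ≥ |w| + 2`. -/
theorem many_orbit_blocking_words (w : F2) :
    (IsPrimitive w →
      PrimitivityBlocking (ga ^ (w.toWord.length + 2) * gb ^ (w.toWord.length + 2))) ∧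
    (∀ s t : ℕ, w.toWord.length + 2 ≤ s → w.toWord.length + 2 ≤ t →
      OrbitBlocking (ga ^ s * gb ^ t) w) := by
  refine ⟨?_, fun s t hs ht => orbitBlocking_ga_pow_mul_gb_pow hs ht⟩
  rintro ⟨_, ψ, rfl, -⟩ _ ⟨_, φ, rfl, -⟩ hu
  have := orbitBlocking_ga_pow_mul_gb_pow le_rfl le_rfl (ψ.symm.trans φ) (w := ψ ga)
  simp only [MulEquiv.trans_apply, MulEquiv.symm_apply_apply] at this
  exact this hu
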